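/- arXiv:2410.13635 — 2 statements merged into one kernel-verified Lean document; each statement's English description precedes it below -/
import Mathlib

section
/- For every integer r ≥ 0 there exists a constant C > 0, depending only on r, with the following property: for every T > 0, all real numbers a, b with 0 ≤ a < b ≤ T, every real polynomial w of degree at most r, and every real polynomial q of degree at most r satisfying ∫_a^b (φ_T(t)·w(t) − q(t))·p(t) dt = 0 for every real polynomial p of degree at most r, one has ‖(φ_T·w)′ − q′‖_{L²(a,b)} ≤ C ‖w‖_{L²(a,b)}, where (φ_T·w)′ denotes the derivative of t ↦ φ_T(t)·w(t). -/
/-!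
Put `φ = φ_T` and `M = φ(a)`. The polynomial `M w` is reproduced by the projection, so
`s = q - M w` is the projection of `(φ - M) w` and
`(φ w)' - q' = φ' w + (φ - M) w' - s'`.
If `φ` is `L`-Lipschitz on `[a, b]`, then `|φ - M| ≤ L (b - a)` there, and this factor `b - a`
absorbs the `(b - a)⁻¹` which the inverse inequality for polynomials costs in each of the last two
terms. The weight `φ_T` is `e`-Lipschitz on `[0, ∞)`, uniformly in `T`.
-/

section

open MeasureTheory Polynomial Set
open scoped NNReal

variable {a b : ℝ}

/-- The inner product `∫ t in a..b, p t * q t` on real polynomials, the structure of `L²(a, b)`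
in which the inverse inequality becomes boundedness of a linear map. It is not an instance since it
depends on the interval. -/
@[reducible]
noncomputable def polynomialL2Core (hab : a < b) : InnerProductSpace.Core ℝ ℝ[X] where
  inner p q := ∫ t in a..b, p.eval t * q.eval t
  conj_inner_symm p q := by simp only [mul_comm, conj_trivial]
  re_inner_nonneg p :=
    intervalIntegral.integral_nonneg hab.le fun t _ => mul_self_nonneg (p.eval t)
  add_left p q s := by
    simp only [eval_add, add_mul]
    exact intervalIntegral.integral_add (Continuous.intervalIntegrable (by fun_prop) _ _)
      (Continuous.intervalIntegrable (by fun_prop) _ _)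
  smul_left p q c := by
    simp only [eval_smul, smul_eq_mul, mul_assoc, intervalIntegral.integral_const_mul, conj_trivial]
  definite p hp := by
    by_contra hne
    obtain ⟨t, ht, hpt⟩ : ∃ t ∈ Icc a b, p.eval t ≠ 0 := by
      by_contra! h
      exact hne (eq_zero_of_infinite_isRoot p ((Icc_infinite hab).mono h))
    exact (intervalIntegral.integral_pos hab (by fun_prop) (fun t _ => mul_self_nonneg (p.eval t))
      ⟨t, ht, mul_self_pos.mpr hpt⟩).ne' hp

theorem exists_integral_sq_derivative_le_of_lt (hab : a < b) (r : ℕ) :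
    ∃ K : ℝ, 0 ≤ K ∧ ∀ p : ℝ[X], p.natDegree ≤ r →
      ∫ t in a..b, p.derivative.eval t ^ 2 ≤ K * ∫ t in a..b, p.eval t ^ 2 := by
  let core := polynomialL2Core hab
  let _ : NormedAddCommGroup ℝ[X] := core.toNormedAddCommGroup
  let _ : InnerProductSpace ℝ ℝ[X] := InnerProductSpace.ofCore core.toCore
  have norm_sq (p : ℝ[X]) : ‖p‖ ^ 2 = ∫ t in a..b, p.eval t ^ 2 := by
    rw [← real_inner_self_eq_norm_sq]
    simp only [sq]
    rfl
  let D : degreeLT ℝ (r + 1) →L[ℝ] ℝ[X] :=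
    LinearMap.toContinuousLinearMap (derivative.domRestrict (degreeLT ℝ (r + 1)))
  refine ⟨‖D‖ ^ 2, sq_nonneg _, fun p hp => ?_⟩
  have hp_mem : p ∈ degreeLT ℝ (r + 1) := by
    rw [degreeLT_succ_eq_degreeLE]
    exact mem_degreeLE.mpr (natDegree_le_iff_degree_le.mp hp)
  have hD : ‖derivative p‖ ≤ ‖D‖ * ‖p‖ := D.le_opNorm ⟨p, hp_mem⟩
  rw [← norm_sq, ← norm_sq, ← mul_pow]
  exact pow_le_pow_left₀ (norm_nonneg _) hD 2

theorem exists_sq_mul_integral_sq_derivative_le (r : ℕ) :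
    ∃ K : ℝ, 0 ≤ K ∧ ∀ a b : ℝ, a ≤ b → ∀ p : ℝ[X], p.natDegree ≤ r →
      (b - a) ^ 2 * ∫ t in a..b, p.derivative.eval t ^ 2 ≤ K * ∫ t in a..b, p.eval t ^ 2 := by
  obtain ⟨K, hK, hunit⟩ := exists_integral_sq_derivative_le_of_lt (zero_lt_one' ℝ) r
  refine ⟨K, hK, fun a b hab p hp => ?_⟩
  have rescale (f : ℝ → ℝ) :
      ∫ t in a..b, f t = (b - a) * ∫ t in (0 : ℝ)..1, f (a + (b - a) * t) := by
    simp only [intervalIntegral.mul_integral_comp_add_mul, mul_zero, add_zero, mul_one,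
      add_sub_cancel]
  let ℓ : ℝ[X] := C a + C (b - a) * X
  have heval (t : ℝ) : ℓ.eval t = a + (b - a) * t := by
    simp only [ℓ, eval_add, eval_mul, eval_C, eval_X]
  have hderiv : derivative ℓ = C (b - a) := by
    simp only [ℓ, derivative_add, derivative_C, derivative_C_mul, derivative_X, zero_add, mul_one]
  have hdeg : (p.comp ℓ).natDegree ≤ r := calc
    (p.comp ℓ).natDegree ≤ p.natDegree * ℓ.natDegree := natDegree_comp_le
    _ ≤ p.natDegree * 1 := Nat.mul_le_mul_left _ (by simp only [ℓ]; compute_degree)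
    _ ≤ r := by rwa [mul_one]
  have hcomp := hunit (p.comp ℓ) hdeg
  simp only [derivative_comp, hderiv, eval_mul, eval_comp, eval_C, heval, mul_pow,
    intervalIntegral.integral_const_mul] at hcomp
  rw [rescale fun t => p.derivative.eval t ^ 2, rescale fun t => p.eval t ^ 2, mul_left_comm,
    mul_left_comm K]
  exact mul_le_mul_of_nonneg_left hcomp (sub_nonneg.mpr hab)

theorem integral_sq_le_of_integral_sub_mul_eq_zero {α : Type*} [MeasurableSpace α] {μ : Measure α}
    {f g : α → ℝ} (hf : MemLp f 2 μ) (hg : MemLp g 2 μ) (h : ∫ x, (f x - g x) * g x ∂μ = 0) :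
    ∫ x, g x ^ 2 ∂μ ≤ ∫ x, f x ^ 2 ∂μ := by
  have hcross : Integrable (fun x => 2 * ((f x - g x) * g x)) μ :=
    ((hf.sub hg).integrable_mul hg).const_mul 2
  calc ∫ x, g x ^ 2 ∂μ
      = ∫ x, (g x ^ 2 + 2 * ((f x - g x) * g x)) ∂μ := by
        rw [integral_add hg.integrable_sq hcross, integral_const_mul, h, mul_zero, add_zero]
    _ ≤ ∫ x, f x ^ 2 ∂μ :=
        integral_mono (hg.integrable_sq.add hcross) hf.integrable_sq fun x => by
          nlinarith [sq_nonneg (f x - g x)]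

theorem memLp_restrict_of_continuousOn_isCompact {α E : Type*} [TopologicalSpace α] [T2Space α]
    [MeasurableSpace α] [BorelSpace α] [NormedAddCommGroup E]
    {μ : Measure α} [IsFiniteMeasureOnCompacts μ] {f : α → E} {k s : Set α} (hk : IsCompact k)
    (hs : s ⊆ k) (hf : ContinuousOn f k) (p : ENNReal) : MemLp f p (μ.restrict s) := by
  obtain ⟨B, hB⟩ := hk.exists_bound_of_continuousOn hf
  have : IsFiniteMeasure (μ.restrict k) := isFiniteMeasure_restrict.mpr hk.measure_ne_top
  have hmem : MemLp f p (μ.restrict k) :=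
    MemLp.of_bound (hf.aestronglyMeasurable_of_isCompact hk hk.measurableSet) B
      (ae_restrict_of_forall_mem hk.measurableSet hB)
  exact hmem.mono_measure (Measure.restrict_mono hs le_rfl)

/-- `q` is the `L²(a, b)`-orthogonal projection of `f` onto the polynomials of degree at most `r`.
It is meaningful for integrable `f` only: otherwise the integrals may be the junk value `0`. -/
structure IsL2PolynomialProj (r : ℕ) (a b : ℝ) (f : ℝ → ℝ) (q : ℝ[X]) : Prop where
  natDegree_le : q.natDegree ≤ r
  integral_sub_mul_eq_zero : ∀ p : ℝ[X], p.natDegree ≤ r →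
    ∫ t in a..b, (f t - q.eval t) * p.eval t = 0

namespace IsL2PolynomialProj

variable {r : ℕ} {f : ℝ → ℝ} {q : ℝ[X]}

theorem sub_eval (hq : IsL2PolynomialProj r a b f q) {p : ℝ[X]} (hp : p.natDegree ≤ r) :
    IsL2PolynomialProj r a b (fun t => f t - p.eval t) (q - p) where
  natDegree_le := (natDegree_sub_le _ _).trans (max_le hq.natDegree_le hp)
  integral_sub_mul_eq_zero := by
    simpa only [eval_sub, sub_sub_sub_cancel_right] using hq.integral_sub_mul_eq_zero

theorem integral_sq_le (hq : IsL2PolynomialProj r a b f q) (hab : a ≤ b)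
    (hf : MemLp f 2 (volume.restrict (Ioc a b))) :
    ∫ t in a..b, q.eval t ^ 2 ≤ ∫ t in a..b, f t ^ 2 := by
  have horth := hq.integral_sub_mul_eq_zero q hq.natDegree_le
  rw [intervalIntegral.integral_of_le hab] at horth
  rw [intervalIntegral.integral_of_le hab, intervalIntegral.integral_of_le hab]
  exact integral_sq_le_of_integral_sub_mul_eq_zero hf
    (memLp_restrict_of_continuousOn_isCompact isCompact_Icc Ioc_subset_Icc_self
      q.continuousOn 2) horth

end IsL2PolynomialProj

theorem sq_add_add_le {R : Type*} [CommRing R] [LinearOrder R] [IsStrictOrderedRing R]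
    (x y z : R) : (x + y + z) ^ 2 ≤ 3 * (x ^ 2 + y ^ 2 + z ^ 2) := by
  nlinarith [sq_nonneg (x - y), sq_nonneg (y - z), sq_nonneg (x - z)]

section LipschitzWeight

variable {L : ℝ≥0} {φ : ℝ → ℝ}

theorem sq_sub_left_le_of_lipschitzOnWith (hφ : LipschitzOnWith L φ (Icc a b)) {t : ℝ}
    (ht : t ∈ Icc a b) : (φ t - φ a) ^ 2 ≤ (L * (b - a)) ^ 2 := by
  have hLip : |φ t - φ a| ≤ L * (b - a) := calc
    |φ t - φ a| ≤ L * |t - a| := hφ.dist_le_mul t ht a ⟨le_rfl, ht.1.trans ht.2⟩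
    _ = L * (t - a) := by rw [abs_of_nonneg (sub_nonneg.mpr ht.1)]
    _ ≤ L * (b - a) := by gcongr; exact ht.2
  exact sq_le_sq' (abs_le.mp hLip).1 (abs_le.mp hLip).2

theorem ae_differentiableAt_and_abs_deriv_le (hφ : LipschitzOnWith L φ (Icc a b)) :
    ∀ᵐ t ∂volume.restrict (Ioc a b),
      t ∈ Icc a b ∧ DifferentiableAt ℝ φ t ∧ |deriv φ t| ≤ L := by
  rw [← restrict_Ioo_eq_restrict_Ioc]
  filter_upwards [ae_restrict_mem measurableSet_Ioo,
    ae_restrict_of_ae hφ.ae_differentiableWithinAt_of_mem_real] with t ht hdiff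
  have hnhds : Icc a b ∈ nhds t := Icc_mem_nhds ht.1 ht.2
  have htmem : t ∈ Icc a b := Ioo_subset_Icc_self ht
  exact ⟨htmem, (hdiff htmem).differentiableAt hnhds, norm_deriv_le_of_lipschitzOn hnhds hφ⟩

theorem ae_sq_deriv_mul_eval_sub_le (hφ : LipschitzOnWith L φ (Icc a b)) (w q : ℝ[X]) :
    ∀ᵐ t ∂volume.restrict (Ioc a b),
      (deriv (fun x => φ x * w.eval x) t - q.derivative.eval t) ^ 2 ≤
        3 * (L ^ 2 * w.eval t ^ 2 + (L * (b - a)) ^ 2 * w.derivative.eval t ^ 2 +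
          (q - C (φ a) * w).derivative.eval t ^ 2) := by
  filter_upwards [ae_differentiableAt_and_abs_deriv_le hφ] with t ⟨ht, hdiff, hderiv⟩
  have hsplit : deriv (fun x => φ x * w.eval x) t - q.derivative.eval t =
      deriv φ t * w.eval t + (φ t - φ a) * w.derivative.eval t +
        -(q - C (φ a) * w).derivative.eval t := by
    rw [deriv_fun_mul hdiff w.differentiableAt, w.deriv]
    simp only [derivative_sub, derivative_C_mul, eval_sub, eval_mul, eval_C]
    ring
  rw [hsplit]
  refine (sq_add_add_le _ _ _).trans ?_
  rw [mul_pow, mul_pow, neg_sq]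
  gcongr 3 * (?_ * _ + ?_ * _ + _)
  · exact sq_le_sq' (abs_le.mp hderiv).1 (abs_le.mp hderiv).2
  · exact sq_sub_left_le_of_lipschitzOnWith hφ ht

theorem integral_sq_deriv_mul_eval_sub_le (hab : a ≤ b) (hφ : LipschitzOnWith L φ (Icc a b))
    (w q : ℝ[X]) :
    ∫ t in a..b, (deriv (fun x => φ x * w.eval x) t - q.derivative.eval t) ^ 2 ≤
      3 * (L ^ 2 * (∫ t in a..b, w.eval t ^ 2) +
        (L * (b - a)) ^ 2 * (∫ t in a..b, w.derivative.eval t ^ 2) +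
        ∫ t in a..b, (q - C (φ a) * w).derivative.eval t ^ 2) := by
  have hint {g : ℝ → ℝ} (hg : Continuous g) : IntervalIntegrable g volume a b :=
    hg.intervalIntegrable a b
  calc ∫ t in a..b, (deriv (fun x => φ x * w.eval x) t - q.derivative.eval t) ^ 2
      ≤ ∫ t in a..b, 3 * (L ^ 2 * w.eval t ^ 2 + (L * (b - a)) ^ 2 * w.derivative.eval t ^ 2 +
          (q - C (φ a) * w).derivative.eval t ^ 2) := by
        rw [intervalIntegral.integral_of_le hab, intervalIntegral.integral_of_le hab]
        exact integral_mono_of_nonneg (Filter.Eventually.of_forall fun t => sq_nonneg _)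
          (hint (by fun_prop)).1 (ae_sq_deriv_mul_eval_sub_le hφ w q)
    _ = _ := by
        rw [intervalIntegral.integral_const_mul,
          intervalIntegral.integral_add (hint (by fun_prop)) (hint (by fun_prop)),
          intervalIntegral.integral_add (hint (by fun_prop)) (hint (by fun_prop)),
          intervalIntegral.integral_const_mul, intervalIntegral.integral_const_mul]

theorem IsL2PolynomialProj.integral_sq_sub_C_mul_le {r : ℕ} {w q : ℝ[X]} (hab : a ≤ b)
    (hφ : LipschitzOnWith L φ (Icc a b)) (hw : w.natDegree ≤ r)
    (hq : IsL2PolynomialProj r a b (fun t => φ t * w.eval t) q) :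
    ∫ t in a..b, (q - C (φ a) * w).eval t ^ 2 ≤
      (L * (b - a)) ^ 2 * ∫ t in a..b, w.eval t ^ 2 := by
  have hcont : ContinuousOn (fun t => φ t * w.eval t - (C (φ a) * w).eval t) (Icc a b) :=
    (hφ.continuousOn.mul w.continuousOn).sub (C (φ a) * w).continuousOn
  refine ((hq.sub_eval ((natDegree_C_mul_le _ _).trans hw)).integral_sq_le hab
    (memLp_restrict_of_continuousOn_isCompact isCompact_Icc Ioc_subset_Icc_self hcont 2)).trans ?_
  rw [← intervalIntegral.integral_const_mul]
  refine intervalIntegral.integral_mono_on hab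
    ((hcont.pow 2).intervalIntegrable_of_Icc hab)
    (Continuous.intervalIntegrable (by fun_prop) a b) fun t ht => ?_
  calc (φ t * w.eval t - (C (φ a) * w).eval t) ^ 2
      = (φ t - φ a) ^ 2 * w.eval t ^ 2 := by rw [eval_C_mul, ← sub_mul, mul_pow]
    _ ≤ (L * (b - a)) ^ 2 * w.eval t ^ 2 :=
        mul_le_mul_of_nonneg_right (sq_sub_left_le_of_lipschitzOnWith hφ ht) (sq_nonneg _)

end LipschitzWeight

-- A Lipschitz `φ` is differentiable almost everywhere, so the junk values of `deriv` do not enter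
-- the integral.
theorem proj_exp_weight_deriv_estimate_general (r : ℕ) :
    ∃ C : ℝ, 0 < C ∧ ∀ (a b : ℝ) (L : ℝ≥0) (φ : ℝ → ℝ), a < b → LipschitzOnWith L φ (Icc a b) →
      ∀ w q : ℝ[X], w.natDegree ≤ r → IsL2PolynomialProj r a b (fun t => φ t * w.eval t) q →
        √(∫ t in a..b, (deriv (fun x => φ x * w.eval x) t - q.derivative.eval t) ^ 2) ≤
          C * L * √(∫ t in a..b, w.eval t ^ 2) := by
  obtain ⟨K, hK, inverse_le⟩ := exists_sq_mul_integral_sq_derivative_le r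
  refine ⟨√(3 * (1 + 2 * K)), by positivity, fun a b L φ hab hφ w q hw hq => ?_⟩
  set W := ∫ t in a..b, w.eval t ^ 2
  let s := q - C (φ a) * w
  have hs_deg : s.natDegree ≤ r :=
    (hq.sub_eval ((natDegree_C_mul_le (φ a) w).trans hw)).natDegree_le
  have hs' : ∫ t in a..b, s.derivative.eval t ^ 2 ≤ L ^ 2 * (K * W) := by
    refine le_of_mul_le_mul_left ?_ (pow_pos (sub_pos.mpr hab) 2)
    calc (b - a) ^ 2 * ∫ t in a..b, s.derivative.eval t ^ 2
        ≤ K * ∫ t in a..b, s.eval t ^ 2 := inverse_le a b hab.le s hs_deg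
      _ ≤ K * ((L * (b - a)) ^ 2 * W) :=
          mul_le_mul_of_nonneg_left (hq.integral_sq_sub_C_mul_le hab.le hφ hw) hK
      _ = (b - a) ^ 2 * (L ^ 2 * (K * W)) := by ring
  have hw' : (L * (b - a)) ^ 2 * ∫ t in a..b, w.derivative.eval t ^ 2 ≤ L ^ 2 * (K * W) := by
    rw [mul_pow, mul_assoc]
    exact mul_le_mul_of_nonneg_left (inverse_le a b hab.le w hw) (sq_nonneg _)
  calc √(∫ t in a..b, (deriv (fun x => φ x * w.eval x) t - q.derivative.eval t) ^ 2)
      ≤ √(3 * (1 + 2 * K) * L ^ 2 * W) := by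
        refine Real.sqrt_le_sqrt ((integral_sq_deriv_mul_eval_sub_le hab.le hφ w q).trans ?_)
        linarith
    _ = √(3 * (1 + 2 * K)) * L * √W := by
        rw [Real.sqrt_mul (by positivity), Real.sqrt_mul (by positivity),
          Real.sqrt_sq L.coe_nonneg]

theorem hasDerivAt_exp_weight {T : ℝ} (hT : T ≠ 0) (t : ℝ) :
    HasDerivAt (fun s => T * Real.exp ((T - s) / T)) (-Real.exp ((T - t) / T)) t := by
  refine HasDerivAt.congr_deriv
    ((((hasDerivAt_id' t).const_sub T).div_const T).exp.const_mul T) ?_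
  field_simp

theorem lipschitzOnWith_exp_weight {T : ℝ} (hT : 0 < T) :
    LipschitzOnWith (Real.nnabs (Real.exp 1)) (fun t => T * Real.exp ((T - t) / T)) (Ici 0) := by
  refine (convex_Ici 0).lipschitzOnWith_of_nnnorm_hasDerivWithin_le
    (fun t _ => (hasDerivAt_exp_weight hT.ne' t).hasDerivWithinAt) fun t ht => ?_
  have hexponent : (T - t) / T ≤ 1 := (div_le_one hT).mpr (sub_le_self T ht)
  rw [← NNReal.coe_le_coe, coe_nnnorm, norm_neg, Real.norm_eq_abs, Real.abs_exp]
  simpa using hexponent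

end

/-- Derivative estimate for the `L²(a,b)`-orthogonal projection error of `φ_T · w`,
where `φ_T(t) = T exp((T-t)/T)` and `w` is a polynomial of degree at most `r`. -/
theorem proj_exp_weight_deriv_estimate (r : ℕ) :
    ∃ C : ℝ, 0 < C ∧ ∀ T a b : ℝ, 0 < T → 0 ≤ a → a < b → b ≤ T →
      ∀ w q : Polynomial ℝ, w.natDegree ≤ r → q.natDegree ≤ r →
        (∀ p : Polynomial ℝ, p.natDegree ≤ r →
          (∫ t in a..b,
            (T * Real.exp ((T - t) / T) * w.eval t - q.eval t) * p.eval t) = 0) →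
        Real.sqrt (∫ t in a..b,
            (deriv (fun s : ℝ => T * Real.exp ((T - s) / T) * w.eval s) t -
              q.derivative.eval t) ^ 2) ≤
          C * Real.sqrt (∫ t in a..b, (w.eval t) ^ 2) := by
  obtain ⟨C, hC, estimate⟩ := proj_exp_weight_deriv_estimate_general r
  refine ⟨C * Real.exp 1, by positivity, fun T a b hT ha hab _ w q hw hq horth => ?_⟩
  have hweight := (lipschitzOnWith_exp_weight hT).mono fun t (ht : t ∈ Set.Icc a b) => ha.trans ht.1
  simpa using estimate a b _ _ hab hweight w q hw ⟨hq, horth⟩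
end

section
/- For every integer r ≥ 0 there exists a constant C > 0, depending only on r, with the following property: for every T > 0, all real numbers a, b with 0 ≤ a < b ≤ T, every real polynomial w of degree at most r, and every real polynomial q of degree at most r satisfying ∫_a^b (φ_T(t)·w(t) − q(t))·p(t) dt = 0 for every real polynomial p of degree at most r, one has (φ_T(a)·w(a) − q(a))² + (φ_T(b)·w(b) − q(b))² ≤ C (b−a) ‖w‖²_{L²(a,b)}. -/
/-!
On polynomials of degree at most `r`, all norms are equivalent, which after rescaling gives the
inverse inequality `(b - a) ‖p‖²_∞ ≤ K ‖p‖²_{L²(a,b)}` with `K` depending only on `r`.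

If `φ` is `L`-Lipschitz and `q` is the projection of `φ w`, freezing the weight at `a` shows that
`v = q - φ(a) w` is the projection of `g = (φ - φ(a)) w`, and `|g| ≤ L (b - a) |w|` on `[a, b]`.
The projection error is `g - v`. The inverse inequality bounds `g` pointwise through `w`, and it
bounds `v` pointwise through `‖v‖_{L²} ≤ ‖g‖_{L²} ≤ L (b - a) ‖w‖_{L²}`. The weight `φ_T` is
`e`-Lipschitz on `[0, ∞)`.
-/

open Polynomial Set MeasureTheory
open scoped NNReal

section InverseInequality

theorem exists_sq_dual_apply_le {𝕜 V : Type*} [Field 𝕜] [LinearOrder 𝕜] [IsStrictOrderedRing 𝕜]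
    [AddCommGroup V] [Module 𝕜 V] [FiniteDimensional 𝕜 V] (B : LinearMap.BilinForm 𝕜 V)
    (hsymm : LinearMap.IsSymm B) (hpos : ∀ v, v ≠ 0 → 0 < B v v) (f : Module.Dual 𝕜 V) :
    ∃ K : 𝕜, 0 < K ∧ ∀ v, f v ^ 2 ≤ K * B v v := by
  have hnonneg (v : V) : 0 ≤ B v v := by
    rcases eq_or_ne v 0 with rfl | hv
    · simp
    · exact (hpos v hv).le
  have hB : B.Nondegenerate := (LinearMap.BilinForm.nondegenerate_iff' B hnonneg hsymm).mpr hpos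
  set g := (B.toDual hB).symm f
  have hcauchy (v : V) : f v ^ 2 ≤ B g g * B v v := by
    simpa [g] using LinearMap.BilinForm.apply_sq_le_of_symm B hnonneg hsymm g v
  exact ⟨B g g + 1, by linarith [hnonneg g], fun v => by linarith [hcauchy v, hnonneg v]⟩

/-- The `L²(a,b)` pairing of real polynomials, `∫_a^b p q`, as a bilinear form. -/
noncomputable def polynomialL2Form (a b : ℝ) : LinearMap.BilinForm ℝ ℝ[X] :=
  have hint (p q : ℝ[X]) : IntervalIntegrable (fun t => p.eval t * q.eval t) volume a b :=
    (p.continuous.mul q.continuous).intervalIntegrable _ _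
  LinearMap.mk₂ ℝ (fun p q => ∫ t in a..b, p.eval t * q.eval t)
    (fun p₁ p₂ q => by
      simp only [eval_add, add_mul]
      exact intervalIntegral.integral_add (hint p₁ q) (hint p₂ q))
    (fun c p q => by simp [mul_assoc])
    (fun p q₁ q₂ => by
      simp only [eval_add, mul_add]
      exact intervalIntegral.integral_add (hint p q₁) (hint p q₂))
    (fun c p q => by simp [mul_left_comm])

theorem polynomialL2Form_apply (a b : ℝ) (p q : ℝ[X]) :
    polynomialL2Form a b p q = ∫ t in a..b, p.eval t * q.eval t :=
  rfl

theorem polynomialL2Form_self (a b : ℝ) (p : ℝ[X]) :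
    polynomialL2Form a b p p = ∫ t in a..b, p.eval t ^ 2 := by
  simp only [polynomialL2Form_apply, sq]

theorem polynomialL2Form_isSymm (a b : ℝ) : LinearMap.IsSymm (polynomialL2Form a b) :=
  ⟨fun p q => by simp only [polynomialL2Form_apply, mul_comm, RingHom.id_apply]⟩

theorem polynomialL2Form_self_pos {a b : ℝ} (hab : a < b) {p : ℝ[X]} (hp : p ≠ 0) :
    0 < polynomialL2Form a b p p := by
  obtain ⟨t, ht, hpt⟩ : ∃ t ∈ Icc a b, p.eval t ≠ 0 := by
    by_contra! hzero
    exact hp (p.eq_zero_of_infinite_isRoot ((Icc_infinite hab).mono hzero))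
  rw [polynomialL2Form_self]
  exact intervalIntegral.integral_pos hab (by fun_prop) (fun s _ => sq_nonneg _)
    ⟨t, ht, by positivity⟩

theorem exists_sq_dual_apply_le_integral_sq (r : ℕ) {a b : ℝ} (hab : a < b)
    (f : Module.Dual ℝ ℝ[X]) :
    ∃ K : ℝ, 0 < K ∧ ∀ p : ℝ[X], p.natDegree ≤ r →
      f p ^ 2 ≤ K * ∫ t in a..b, p.eval t ^ 2 := by
  let V := degreeLT ℝ (r + 1)
  have : FiniteDimensional ℝ V := Module.Finite.equiv (degreeLTEquiv ℝ (r + 1)).symm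
  obtain ⟨K, hK, hfK⟩ := exists_sq_dual_apply_le ((polynomialL2Form a b).restrict V)
    ⟨fun p q => (polynomialL2Form_isSymm a b).eq p q⟩
    (fun p hp => polynomialL2Form_self_pos hab (by simpa using hp)) (f.comp V.subtype)
  refine ⟨K, hK, fun p hp => ?_⟩
  have hpV : p ∈ V := mem_degreeLT.mpr <|
    (natDegree_le_iff_degree_le.mp hp).trans_lt (by exact_mod_cast r.lt_succ_self)
  rw [← polynomialL2Form_self]
  exact hfK ⟨p, hpV⟩

theorem sq_eval_le_sum_sq_coeff {R : Type*} [CommRing R] [LinearOrder R] [IsStrictOrderedRing R]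
    {r : ℕ} {p : R[X]} (hp : p.natDegree ≤ r) {x : R} (hx : |x| ≤ 1) :
    p.eval x ^ 2 ≤ (r + 1) * ∑ i ∈ Finset.range (r + 1), p.coeff i ^ 2 := by
  rw [eval_eq_sum_range' (Nat.lt_succ_of_le hp)]
  calc (∑ i ∈ Finset.range (r + 1), p.coeff i * x ^ i) ^ 2
      ≤ (r + 1) * ∑ i ∈ Finset.range (r + 1), (p.coeff i * x ^ i) ^ 2 := by
        simpa using sq_sum_le_card_mul_sum_sq
          (s := Finset.range (r + 1)) (f := fun i => p.coeff i * x ^ i)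
    _ ≤ (r + 1) * ∑ i ∈ Finset.range (r + 1), p.coeff i ^ 2 := by
        refine mul_le_mul_of_nonneg_left (Finset.sum_le_sum fun i _ => ?_) (by positivity)
        rw [mul_pow, pow_right_comm]
        exact mul_le_of_le_one_right (sq_nonneg _)
          (pow_le_one₀ (sq_nonneg x) ((sq_le_one_iff_abs_le_one x).mpr hx))

theorem exists_sq_eval_le_integral_sq_unitInterval (r : ℕ) :
    ∃ K : ℝ, 0 < K ∧ ∀ p : ℝ[X], p.natDegree ≤ r → ∀ x ∈ Icc (0 : ℝ) 1,
      p.eval x ^ 2 ≤ K * ∫ t in (0 : ℝ)..1, p.eval t ^ 2 := by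
  choose K hK hcoeff using fun i =>
    exists_sq_dual_apply_le_integral_sq r (zero_lt_one' ℝ) (lcoeff ℝ i)
  have hsum : 0 < ∑ i ∈ Finset.range (r + 1), K i := Finset.sum_pos (fun i _ => hK i) (by simp)
  refine ⟨(r + 1) * ∑ i ∈ Finset.range (r + 1), K i, by positivity, fun p hp x hx => ?_⟩
  calc p.eval x ^ 2 ≤ (r + 1) * ∑ i ∈ Finset.range (r + 1), p.coeff i ^ 2 :=
        sq_eval_le_sum_sq_coeff hp (abs_le.mpr ⟨by linarith [hx.1], hx.2⟩)
    _ ≤ (r + 1) * ∑ i ∈ Finset.range (r + 1), K i * ∫ t in (0 : ℝ)..1, p.eval t ^ 2 := by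
        gcongr with i
        exact hcoeff i p hp
    _ = _ := by rw [← Finset.sum_mul, mul_assoc]

theorem exists_sq_eval_le_integral_sq (r : ℕ) :
    ∃ K : ℝ, 0 < K ∧ ∀ a b : ℝ, a < b → ∀ p : ℝ[X], p.natDegree ≤ r → ∀ x ∈ Icc a b,
      (b - a) * p.eval x ^ 2 ≤ K * ∫ t in a..b, p.eval t ^ 2 := by
  obtain ⟨K, hK, hunit⟩ := exists_sq_eval_le_integral_sq_unitInterval r
  refine ⟨K, hK, fun a b hab p hp x hx => ?_⟩
  have hlen : 0 < b - a := sub_pos.mpr hab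
  set P := p.comp (C (b - a) * X + C a) with hP
  have hPeval (t : ℝ) : P.eval t = p.eval ((b - a) * t + a) := by simp [hP]
  have hPdeg : P.natDegree ≤ r := by
    rwa [hP, natDegree_comp, natDegree_linear hlen.ne', mul_one]
  have hscale : (b - a) * ∫ t in (0 : ℝ)..1, P.eval t ^ 2 = ∫ t in a..b, p.eval t ^ 2 := by
    simp [hPeval, intervalIntegral.mul_integral_comp_mul_add (f := fun u => p.eval u ^ 2)]
  have hx' : (x - a) / (b - a) ∈ Icc (0 : ℝ) 1 :=
    ⟨div_nonneg (sub_nonneg.mpr hx.1) hlen.le, (div_le_one hlen).mpr (by linarith [hx.2])⟩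
  have hPx : P.eval ((x - a) / (b - a)) = p.eval x := by
    rw [hPeval, mul_div_cancel₀ _ hlen.ne', sub_add_cancel]
  rw [← hscale, mul_left_comm, ← hPx]
  exact mul_le_mul_of_nonneg_left (hunit P hPdeg _ hx') hlen.le

end InverseInequality

/-- `q` is the `L²(a,b)`-orthogonal projection of `g` onto the polynomials of degree at most `r`,
characterised by the orthogonality of `g - q` to all such polynomials. -/
structure IsL2PolynomialProjection (r : ℕ) (a b : ℝ) (g : ℝ → ℝ) (q : ℝ[X]) : Prop where
  natDegree_le : q.natDegree ≤ r
  integral_mul_eq_zero : ∀ p : ℝ[X], p.natDegree ≤ r →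
    ∫ t in a..b, (g t - q.eval t) * p.eval t = 0

namespace IsL2PolynomialProjection

variable {r : ℕ} {a b : ℝ} {g : ℝ → ℝ} {p q : ℝ[X]}

theorem sub_polynomial (hq : IsL2PolynomialProjection r a b g q) (hp : p.natDegree ≤ r) :
    IsL2PolynomialProjection r a b (fun t => g t - p.eval t) (q - p) where
  natDegree_le := (natDegree_sub_le _ _).trans (max_le hq.natDegree_le hp)
  integral_mul_eq_zero s hs := by
    simpa only [eval_sub, sub_sub_sub_cancel_right] using hq.integral_mul_eq_zero s hs

theorem integral_sq_le (hq : IsL2PolynomialProjection r a b g q) (hab : a ≤ b)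
    (hg : IntervalIntegrable g volume a b)
    (hg2 : IntervalIntegrable (fun t => g t ^ 2) volume a b) :
    ∫ t in a..b, q.eval t ^ 2 ≤ ∫ t in a..b, g t ^ 2 := by
  have hcross : IntervalIntegrable (fun t => (g t - q.eval t) * q.eval t) volume a b :=
    (hg.sub (q.continuous.intervalIntegrable _ _)).mul_continuousOn q.continuous.continuousOn
  have hsq : IntervalIntegrable (fun t => q.eval t ^ 2) volume a b :=
    (q.continuous.pow 2).intervalIntegrable _ _
  calc ∫ t in a..b, q.eval t ^ 2
      = ∫ t in a..b, (2 * ((g t - q.eval t) * q.eval t) + q.eval t ^ 2) := by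
        rw [intervalIntegral.integral_add (hcross.const_mul 2) hsq,
          intervalIntegral.integral_const_mul, hq.integral_mul_eq_zero q hq.natDegree_le,
          mul_zero, zero_add]
    _ ≤ ∫ t in a..b, g t ^ 2 :=
        intervalIntegral.integral_mono_on hab ((hcross.const_mul 2).add hsq) hg2
          fun t _ => by linarith [sq_nonneg (g t - q.eval t)]

end IsL2PolynomialProjection

section LipschitzWeight

variable {L : ℝ≥0} {φ : ℝ → ℝ} {a b c : ℝ}

theorem sq_sub_mul_le_of_lipschitzOnWith_Icc (hφ : LipschitzOnWith L φ (Icc a b))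
    (hc : c ∈ Icc a b) {t : ℝ} (ht : t ∈ Icc a b) (y : ℝ) :
    ((φ t - φ c) * y) ^ 2 ≤ (L * (b - a)) ^ 2 * y ^ 2 := by
  have hdist : |φ t - φ c| ≤ L * (b - a) :=
    (hφ.dist_le_mul t ht c hc).trans <|
      mul_le_mul_of_nonneg_left (Real.dist_le_of_mem_Icc ht hc) L.coe_nonneg
  rw [mul_pow, ← sq_abs (φ t - φ c)]
  gcongr

theorem integral_sq_projection_sub_C_mul_le {r : ℕ} {w q : ℝ[X]} (hab : a ≤ b)
    (hφ : LipschitzOnWith L φ (Icc a b)) (hc : c ∈ Icc a b) (hw : w.natDegree ≤ r)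
    (hq : IsL2PolynomialProjection r a b (fun t => φ t * w.eval t) q) :
    ∫ t in a..b, (q - C (φ c) * w).eval t ^ 2 ≤
      (L * (b - a)) ^ 2 * ∫ t in a..b, w.eval t ^ 2 := by
  have hv : IsL2PolynomialProjection r a b (fun t => (φ t - φ c) * w.eval t) (q - C (φ c) * w) := by
    simpa only [eval_mul, eval_C, ← sub_mul] using
      hq.sub_polynomial ((natDegree_C_mul_le (φ c) w).trans hw)
  have hcont : ContinuousOn (fun t => (φ t - φ c) * w.eval t) (uIcc a b) := by
    rw [uIcc_of_le hab]
    exact (hφ.continuousOn.sub continuousOn_const).mul w.continuous.continuousOn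
  calc ∫ t in a..b, (q - C (φ c) * w).eval t ^ 2
      ≤ ∫ t in a..b, ((φ t - φ c) * w.eval t) ^ 2 :=
        hv.integral_sq_le hab hcont.intervalIntegrable (hcont.pow 2).intervalIntegrable
    _ ≤ ∫ t in a..b, (L * (b - a)) ^ 2 * w.eval t ^ 2 :=
        intervalIntegral.integral_mono_on hab (hcont.pow 2).intervalIntegrable
          (Continuous.intervalIntegrable (by fun_prop) _ _)
          fun t ht => sq_sub_mul_le_of_lipschitzOnWith_Icc hφ hc ht (w.eval t)
    _ = (L * (b - a)) ^ 2 * ∫ t in a..b, w.eval t ^ 2 :=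
        intervalIntegral.integral_const_mul _ _

end LipschitzWeight

theorem proj_exp_weight_trace_estimate_general (r : ℕ) :
    ∃ K : ℝ, 0 < K ∧ ∀ (L : ℝ≥0) (φ : ℝ → ℝ) (a b : ℝ), a < b → LipschitzOnWith L φ (Icc a b) →
      ∀ w q : ℝ[X], w.natDegree ≤ r →
        IsL2PolynomialProjection r a b (fun t => φ t * w.eval t) q →
        ∀ x ∈ Icc a b, (φ x * w.eval x - q.eval x) ^ 2 ≤
          K * L ^ 2 * (b - a) * ∫ t in a..b, w.eval t ^ 2 := by
  obtain ⟨K, hK, hinverse⟩ := exists_sq_eval_le_integral_sq r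
  refine ⟨4 * K, by positivity, fun L φ a b hab hφ w q hw hq x hx => ?_⟩
  have ha : a ∈ Icc a b := left_mem_Icc.mpr hab.le
  set v := q - C (φ a) * w
  set W := ∫ t in a..b, w.eval t ^ 2
  have hvdeg : v.natDegree ≤ r := (natDegree_sub_le _ _).trans
    (max_le hq.natDegree_le ((natDegree_C_mul_le _ _).trans hw))
  have hg : (b - a) * ((φ x - φ a) * w.eval x) ^ 2 ≤ (L * (b - a)) ^ 2 * (K * W) :=
    calc (b - a) * ((φ x - φ a) * w.eval x) ^ 2
        ≤ (b - a) * ((L * (b - a)) ^ 2 * w.eval x ^ 2) := mul_le_mul_of_nonneg_left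
          (sq_sub_mul_le_of_lipschitzOnWith_Icc hφ ha hx _) (sub_nonneg.mpr hab.le)
      _ = (L * (b - a)) ^ 2 * ((b - a) * w.eval x ^ 2) := mul_left_comm _ _ _
      _ ≤ (L * (b - a)) ^ 2 * (K * W) :=
        mul_le_mul_of_nonneg_left (hinverse a b hab w hw x hx) (sq_nonneg _)
  have hv : (b - a) * v.eval x ^ 2 ≤ K * ((L * (b - a)) ^ 2 * W) :=
    (hinverse a b hab v hvdeg x hx).trans <| mul_le_mul_of_nonneg_left
      (integral_sq_projection_sub_C_mul_le hab.le hφ ha hw hq) hK.le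
  have herror : φ x * w.eval x - q.eval x = (φ x - φ a) * w.eval x - v.eval x := by
    simp only [v, eval_sub, eval_mul, eval_C]
    ring
  refine le_of_mul_le_mul_left ?_ (sub_pos.mpr hab)
  calc (b - a) * (φ x * w.eval x - q.eval x) ^ 2
      ≤ (b - a) * (2 * (((φ x - φ a) * w.eval x) ^ 2 + v.eval x ^ 2)) := by
        rw [herror, sub_eq_add_neg, ← neg_sq (v.eval x)]
        exact mul_le_mul_of_nonneg_left add_sq_le (sub_nonneg.mpr hab.le)
    _ ≤ (b - a) * (4 * K * L ^ 2 * (b - a) * W) := by linarith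

/-- The exponential weight `φ_T(t) = T exp((T - t) / T)`. -/
noncomputable def expWeight (T t : ℝ) : ℝ :=
  T * Real.exp ((T - t) / T)

theorem hasDerivAt_expWeight {T : ℝ} (hT : T ≠ 0) (t : ℝ) :
    HasDerivAt (expWeight T) (-Real.exp ((T - t) / T)) t := by
  have hchain : HasDerivAt (expWeight T) (T * (Real.exp ((T - t) / T) * (-1 / T))) t :=
    (((hasDerivAt_id t).const_sub T).div_const T).exp.const_mul T
  exact hchain.congr_deriv (by field_simp)

theorem lipschitzOnWith_expWeight {T : ℝ} (hT : 0 < T) :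
    LipschitzOnWith (Real.exp 1).toNNReal (expWeight T) (Ici 0) := by
  refine (convex_Ici 0).lipschitzOnWith_of_nnnorm_hasDerivWithin_le
    (fun t _ => (hasDerivAt_expWeight hT.ne' t).hasDerivWithinAt) fun t ht => ?_
  rw [← NNReal.coe_le_coe, coe_nnnorm, norm_neg, Real.norm_eq_abs, Real.abs_exp,
    Real.coe_toNNReal _ (Real.exp_nonneg 1), Real.exp_le_exp, div_le_one hT]
  exact sub_le_self T ht

/-- Endpoint estimate for the `L²(a,b)`-orthogonal projection error of `φ_T · w`,
where `φ_T(t) = T exp((T-t)/T)` and `w` is a polynomial of degree at most `r`. -/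
theorem proj_exp_weight_trace_estimate (r : ℕ) :
    ∃ C : ℝ, 0 < C ∧ ∀ T a b : ℝ, 0 < T → 0 ≤ a → a < b → b ≤ T →
      ∀ w q : Polynomial ℝ, w.natDegree ≤ r → q.natDegree ≤ r →
        (∀ p : Polynomial ℝ, p.natDegree ≤ r →
          (∫ t in a..b,
            (T * Real.exp ((T - t) / T) * w.eval t - q.eval t) * p.eval t) = 0) →
        (T * Real.exp ((T - a) / T) * w.eval a - q.eval a) ^ 2 +
            (T * Real.exp ((T - b) / T) * w.eval b - q.eval b) ^ 2 ≤
          C * (b - a) * ∫ t in a..b, (w.eval t) ^ 2 := by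
  obtain ⟨K, hK, hbound⟩ := proj_exp_weight_trace_estimate_general r
  refine ⟨2 * (K * Real.exp 1 ^ 2), by positivity, fun T a b hT ha hab _ w q hw hq horth => ?_⟩
  have hpoint := hbound _ (expWeight T) a b hab
    ((lipschitzOnWith_expWeight hT).mono fun t ht => ha.trans ht.1) w q hw ⟨hq, horth⟩
  rw [Real.coe_toNNReal _ (Real.exp_nonneg 1)] at hpoint
  unfold expWeight at hpoint
  linarith [hpoint a (left_mem_Icc.mpr hab.le), hpoint b (right_mem_Icc.mpr hab.le)]
end
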